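/- arXiv:2304.11813 — 2 statements merged into one kernel-verified Lean document; each statement's English description precedes it below -/
import Mathlib

section
/- Let N ≥ 1 and L ≥ 2 be integers and z_{μν} ∈ ℤ antisymmetric for μ,ν ∈ {1,2,3,4}. Define the field z_{μν}(n) = z_{μν}·δ_{n_μ,L−1}·δ_{n_ν,L−1} on the periodic lattice Λ = (ℤ/Lℤ)⁴. Then z_{μν}(n) is exactly flat: for every μ ∈ {1,2,3,4} and every n ∈ Λ, (1/2) Σ_{ν,ρ,σ} ε_{μνρσ} Δ_ν z_{ρσ}(n) = 0; in particular it is flat modulo N. -/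
open scoped BigOperators

noncomputable section

/-- The totally antisymmetric Levi-Civita symbol on four indices in `Fin 4`,
with `levicivita 0 1 2 3 = 1`. -/
noncomputable def levicivita (μ ν ρ σ : Fin 4) : ℤ :=
  if h : Function.Bijective ![μ, ν, ρ, σ] then Equiv.Perm.sign (Equiv.ofBijective _ h) else 0

/-- The 2-form gauge field `z_{μν}(n) = z_{μν} δ_{n_μ,L−1} δ_{n_ν,L−1}` on the
periodic lattice `Λ = (ℤ/Lℤ)⁴`. -/
noncomputable def zFieldP (L : ℕ) (z : Fin 4 → Fin 4 → ℤ)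
    (μ ν : Fin 4) (n : Fin 4 → ZMod L) : ℤ :=
  if n μ = (L : ZMod L) - 1 ∧ n ν = (L : ZMod L) - 1 then z μ ν else 0

/-!
The component `z_{ρσ}(n)` sees only the coordinates `n_ρ` and `n_σ`, so `Δ_ν` annihilates it unless
`ν ∈ {ρ, σ}`, and then the Levi-Civita symbol vanishes: the contraction is zero term by term.
-/

theorem fwdDiff_single_eq_zero_of_dependsOn {ι A G : Type*} [DecidableEq ι] [AddCommMonoid A]
    [AddCommGroup G] {f : (ι → A) → G} {s : Set ι} (hf : DependsOn f s) {i : ι} (hi : i ∉ s)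
    (a : A) : fwdDiff (Pi.single i a) f = 0 := by
  funext n
  have agree : ∀ j ∈ s, (n + Pi.single i a : ι → A) j = n j := fun j hj ↦ by
    simp [Pi.single_eq_of_ne (ne_of_mem_of_not_mem hj hi)]
  exact sub_eq_zero.mpr (hf agree)

theorem notMem_pair_of_levicivita_ne_zero {μ ν ρ σ : Fin 4} (h : levicivita μ ν ρ σ ≠ 0) :
    ν ∉ ({ρ, σ} : Set (Fin 4)) := by
  have inj : Function.Injective ![μ, ν, ρ, σ] := by
    by_contra hinj
    exact h (dif_neg fun hbij ↦ hinj hbij.injective)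
  rintro (hνρ | hνσ)
  · exact absurd (inj (a₁ := 1) (a₂ := 2) hνρ) (by decide)
  · exact absurd (inj (a₁ := 1) (a₂ := 3) hνσ) (by decide)

theorem dependsOn_zFieldP (L : ℕ) (z : Fin 4 → Fin 4 → ℤ) (μ ν : Fin 4) :
    DependsOn (zFieldP L z μ ν) {μ, ν} := fun n m h ↦ by
  simp only [zFieldP, h μ (by simp), h ν (by simp)]

theorem zFieldP_flat_general {A G : Type*} [AddCommMonoid A] [AddCommGroup G]
    {B : Fin 4 → Fin 4 → (Fin 4 → A) → G} (hB : ∀ ρ σ, DependsOn (B ρ σ) {ρ, σ})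
    (a : A) (μ : Fin 4) (n : Fin 4 → A) :
    ∑ ν : Fin 4, ∑ ρ : Fin 4, ∑ σ : Fin 4,
      levicivita μ ν ρ σ • fwdDiff (Pi.single ν a) (B ρ σ) n = 0 := by
  refine Finset.sum_eq_zero fun ν _ ↦ Finset.sum_eq_zero fun ρ _ ↦ Finset.sum_eq_zero fun σ _ ↦ ?_
  by_cases hε : levicivita μ ν ρ σ = 0
  · rw [hε, zero_smul]
  · have hν := notMem_pair_of_levicivita_ne_zero hε
    rw [fwdDiff_single_eq_zero_of_dependsOn (hB ρ σ) hν, Pi.zero_apply, smul_zero]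

/-- The corner-concentrated 2-form field `z_{μν}(n)` is exactly flat:
`(1/2) Σ_{ν,ρ,σ} ε_{μνρσ} Δ_ν z_{ρσ}(n) = 0`; in particular it is flat modulo `N`. -/
theorem zFieldP_flat
    (N L : ℕ) (hN : 1 ≤ N) (hL : 2 ≤ L)
    (z : Fin 4 → Fin 4 → ℤ) (hz : ∀ μ ν, z μ ν = - z ν μ) :
    ∀ (μ : Fin 4) (n : Fin 4 → ZMod L),
      ((1 : ℚ) / 2) * ∑ ν : Fin 4, ∑ ρ : Fin 4, ∑ σ : Fin 4,
          (levicivita μ ν ρ σ : ℚ) *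
            ((zFieldP L z ρ σ (n + Pi.single ν 1) : ℚ) - (zFieldP L z ρ σ n : ℚ))
        = 0 ∧
      ∃ k : ℤ,
        ((1 : ℚ) / 2) * ∑ ν : Fin 4, ∑ ρ : Fin 4, ∑ σ : Fin 4,
            (levicivita μ ν ρ σ : ℚ) *
              ((zFieldP L z ρ σ (n + Pi.single ν 1) : ℚ) - (zFieldP L z ρ σ n : ℚ))
          = (N : ℚ) * (k : ℚ) := by
  intro μ n
  have flat := congrArg (Int.cast : ℤ → ℚ) (zFieldP_flat_general (dependsOn_zFieldP L z) 1 μ n)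
  simp only [fwdDiff, smul_eq_mul, Int.cast_sum, Int.cast_mul, Int.cast_sub, Int.cast_zero] at flat
  exact ⟨by rw [flat, mul_zero], 0, by rw [flat, mul_zero, Int.cast_zero, mul_zero]⟩

end
end

section
/- Let L ≥ 2 be an integer and let z̄_{μν}(n) be an antisymmetric integer field on the periodic lattice Λ = (ℤ/Lℤ)⁴ that is exactly flat, i.e., Σ_{ν,ρ,σ} ε_{μνρσ} Δ_ν z̄_{ρσ}(n) = 0 for every μ and n. Then (1/8) Σ_{n∈Λ} Σ_{μ,ν,ρ,σ} ε_{μνρσ} z̄_{μν}(n) z̄_{ρσ}(n + μ̂ + ν̂) ∈ ℤ. In particular, for every integer N ≥ 1 the fractional part of the lattice topological charge, −(1/8N) Σ_{n∈Λ} Σ_{μ,ν,ρ,σ} ε_{μνρσ} z̄_{μν}(n) z̄_{ρσ}(n + μ̂ + ν̂), lies in (1/N)·ℤ. -/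
open scoped BigOperators

noncomputable section

/-!
The sum is eight times an integer as soon as the cup product of the flat field `z̄` with itself,
evaluated on the torus, is even: antisymmetry accounts for the remaining factor four. Translating
one factor of the cup product by a unit step changes it by a coboundary, which a closed field does
not see; hence one factor may be translated freely. If `L` is odd, translate it by `a` with
`2a = -(1, 1, 1, 1)`: a translation then exchanges the two planes in each term, and the six terms
agree in pairs. If `L` is even, pull `z̄` back to the lattice of odd side `L + 1` along the map that
contracts one edge of every coordinate circle; the pullback is flat with the same cup product.
-/

open fwdDiff

namespace LatticeField

section CupPairing

variable {ι G R : Type*} [AddCommGroup G]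

/-- The translate of a 2-cochain by `-a`, so that its value at `n` is the old value at `n + a`. -/
def shift (a : G) (z : ι → ι → G → R) (μ ν : ι) (n : G) : R :=
  z μ ν (n + a)

lemma shift_zero (z : ι → ι → G → R) : shift 0 z = z := by
  funext μ ν n
  rw [shift, add_zero]

lemma shift_add (a b : G) (z : ι → ι → G → R) : shift (a + b) z = shift a (shift b z) := by
  funext μ ν n
  simp only [shift, add_assoc]

variable [CommRing R] {e : ι → G} {x y z : ι → ι → G → R}

/-- `z` is an `R`-valued cubical 2-cocycle on `G`: `e μ` is the unit step in direction `μ` and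
`z μ ν n` the value on the plaquette at the corner `n` spanned by `μ` and `ν`. Exact flatness of a
2-form gauge field is the condition `closed`. -/
structure IsTwoCocycle (e : ι → G) (z : ι → ι → G → R) : Prop where
  diag : ∀ μ n, z μ μ n = 0
  antisymm : ∀ μ ν n, z μ ν n = -z ν μ n
  closed : ∀ μ ν ρ n, Δ_[e μ] (z ν ρ) n + Δ_[e ν] (z ρ μ) n + Δ_[e ρ] (z μ ν) n = 0

/-- The coboundary `dl` of a 1-cochain `l`. -/
def coboundary (e : ι → G) (l : ι → G → R) (μ ν : ι) (n : G) : R :=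
  Δ_[e μ] (l ν) n - Δ_[e ν] (l μ) n

lemma IsTwoCocycle.of_pairwise_ne (diag : ∀ μ n, z μ μ n = 0)
    (antisymm : ∀ μ ν n, z μ ν n = -z ν μ n)
    (closed : ∀ μ ν ρ n, μ ≠ ν → μ ≠ ρ → ν ≠ ρ →
      Δ_[e μ] (z ν ρ) n + Δ_[e ν] (z ρ μ) n + Δ_[e ρ] (z μ ν) n = 0) :
    IsTwoCocycle e z where
  diag := diag
  antisymm := antisymm
  closed μ ν ρ n := by
    have cancel (α β γ : ι) : Δ_[e γ] (z α β) n + Δ_[e γ] (z β α) n = 0 := by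
      simp only [fwdDiff, antisymm α β]
      ring
    have diag_diff (α β : ι) : Δ_[e α] (z β β) n = 0 := by simp only [fwdDiff, diag, sub_zero]
    rcases eq_or_ne μ ν with rfl | hμν
    · rw [cancel, diag_diff, add_zero]
    rcases eq_or_ne μ ρ with rfl | hμρ
    · rw [diag_diff, add_zero, cancel]
    rcases eq_or_ne ν ρ with rfl | hνρ
    · rw [diag_diff, zero_add, cancel]
    exact closed μ ν ρ n hμν hμρ hνρ

lemma IsTwoCocycle.shift (hz : IsTwoCocycle e z) (a : G) : IsTwoCocycle e (shift a z) where
  diag μ n := hz.diag μ (n + a)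
  antisymm μ ν n := hz.antisymm μ ν (n + a)
  closed μ ν ρ n := by
    simpa only [fwdDiff, LatticeField.shift, add_right_comm n _ a] using hz.closed μ ν ρ (n + a)

-- Cartan's formula: translation is homotopic to the identity, the homotopy being contraction.
lemma IsTwoCocycle.shift_unit_eq_add_coboundary (hz : IsTwoCocycle e z) (τ : ι) :
    LatticeField.shift (e τ) z = z + coboundary e (z τ) := by
  funext μ ν n
  have h := hz.closed τ μ ν n
  simp only [fwdDiff, hz.antisymm ν τ] at h
  simp only [LatticeField.shift, coboundary, fwdDiff, Pi.add_apply]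
  linear_combination h

variable [Fintype G]

/-- The part of the cup product `x ∪ y`, summed over the lattice, in which `x` is evaluated on the
`μν`-plane and `y` on the `ρσ`-plane attached to its far corner. -/
def planePairing (e : ι → G) (x y : ι → ι → G → R) (μ ν ρ σ : ι) : R :=
  ∑ n, x μ ν n * y ρ σ (n + e μ + e ν)

/-- The cup product `x ∪ y` of 2-cochains evaluated on the fundamental class of a four-dimensional
lattice: the signed sum over the (2,2)-shuffles of the four directions. -/
def cupPairing (e : Fin 4 → G) (x y : Fin 4 → Fin 4 → G → R) : R :=
  planePairing e x y 0 1 2 3 + planePairing e x y 2 3 0 1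
    - planePairing e x y 0 2 1 3 - planePairing e x y 1 3 0 2
    + planePairing e x y 0 3 1 2 + planePairing e x y 1 2 0 3

lemma planePairing_shift_comm {a : G} {μ ν ρ σ : ι}
    (ha : e μ + e ν + e ρ + e σ + (a + a) = 0) :
    planePairing e x (shift a y) ρ σ μ ν = planePairing e y (shift a x) μ ν ρ σ := by
  unfold planePairing
  refine Fintype.sum_equiv (Equiv.addRight (e ρ + e σ + a)) _ _ fun n => ?_
  have h_return : n + (e ρ + e σ + a) + e μ + e ν + a = n := by
    calc n + (e ρ + e σ + a) + e μ + e ν + a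
        = n + (e μ + e ν + e ρ + e σ + (a + a)) := by abel
      _ = n := by rw [ha, add_zero]
  simp only [shift, Equiv.coe_addRight, h_return]
  simp only [mul_comm, add_assoc]

lemma sum_mul_fwdDiff (f g : G → R) (h c : G) :
    ∑ n, f n * Δ_[h] g (n + c) = -∑ n, Δ_[h] f n * g (n + c + h) := by
  have translate : ∑ n, f (n + h) * g (n + c + h) = ∑ n, f n * g (n + c) :=
    Fintype.sum_equiv (Equiv.addRight h) _ _ fun n => by
      simp only [Equiv.coe_addRight, add_right_comm n c h]
  simp only [fwdDiff, mul_sub, sub_mul, Finset.sum_sub_distrib, translate]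
  ring

lemma IsTwoCocycle.sum_mul_fwdDiff_eq_zero (hx : IsTwoCocycle e x) (l : G → R) (μ ν ρ : ι) :
    ∑ n, x μ ν n * Δ_[e ρ] l (n + e μ + e ν) - ∑ n, x μ ρ n * Δ_[e ν] l (n + e μ + e ρ)
      + ∑ n, x ν ρ n * Δ_[e μ] l (n + e ν + e ρ) = 0 := by
  have by_parts (α β γ : ι) (h : e α + e β + e γ = e μ + e ν + e ρ) :
      ∑ n, x α β n * Δ_[e γ] l (n + e α + e β)
        = -∑ n, Δ_[e γ] (x α β) n * l (n + (e μ + e ν + e ρ)) := by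
    simpa only [add_assoc, ← h] using sum_mul_fwdDiff (x α β) l (e γ) (e α + e β)
  rw [by_parts μ ν ρ rfl, by_parts μ ρ ν (by abel), by_parts ν ρ μ (by abel), sub_neg_eq_add,
    ← Finset.sum_neg_distrib, ← Finset.sum_neg_distrib, ← Finset.sum_add_distrib,
    ← Finset.sum_add_distrib]
  refine Finset.sum_eq_zero fun n _ => ?_
  have h := hx.closed μ ν ρ n
  simp only [fwdDiff, hx.antisymm ρ μ] at h ⊢
  linear_combination -l (n + (e μ + e ν + e ρ)) * h

lemma planePairing_add_right (x y z : ι → ι → G → R) (μ ν ρ σ : ι) :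
    planePairing e x (y + z) μ ν ρ σ
      = planePairing e x y μ ν ρ σ + planePairing e x z μ ν ρ σ := by
  simp only [planePairing, Pi.add_apply, mul_add, Finset.sum_add_distrib]

lemma planePairing_coboundary (x : ι → ι → G → R) (l : ι → G → R) (μ ν ρ σ : ι) :
    planePairing e x (coboundary e l) μ ν ρ σ
      = ∑ n, x μ ν n * Δ_[e ρ] (l σ) (n + e μ + e ν)
        - ∑ n, x μ ν n * Δ_[e σ] (l ρ) (n + e μ + e ν) := by
  simp only [planePairing, coboundary, mul_sub, Finset.sum_sub_distrib]

section FourDimensional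

variable {e : Fin 4 → G} {x y z : Fin 4 → Fin 4 → G → R}

lemma cupPairing_add_right (x y z : Fin 4 → Fin 4 → G → R) :
    cupPairing e x (y + z) = cupPairing e x y + cupPairing e x z := by
  simp only [cupPairing, planePairing_add_right]
  ring

lemma cupPairing_coboundary (hx : IsTwoCocycle e x) (l : Fin 4 → G → R) :
    cupPairing e x (coboundary e l) = 0 := by
  simp only [cupPairing, planePairing_coboundary]
  linear_combination hx.sum_mul_fwdDiff_eq_zero (l 3) 0 1 2
    - hx.sum_mul_fwdDiff_eq_zero (l 2) 0 1 3 + hx.sum_mul_fwdDiff_eq_zero (l 1) 0 2 3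
    - hx.sum_mul_fwdDiff_eq_zero (l 0) 1 2 3

lemma cupPairing_shift (hx : IsTwoCocycle e x) (hy : IsTwoCocycle e y) {a : G}
    (ha : a ∈ AddSubmonoid.closure (Set.range e)) :
    cupPairing e x (shift a y) = cupPairing e x y := by
  induction ha using AddSubmonoid.closure_induction generalizing y with
  | mem _ h =>
    obtain ⟨τ, rfl⟩ := h
    rw [hy.shift_unit_eq_add_coboundary, cupPairing_add_right, cupPairing_coboundary hx, add_zero]
  | zero => rw [shift_zero]
  | add a b _ _ iha ihb => rw [shift_add, iha (hy.shift b), ihb hy]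

-- On a group of odd order, `-∑ μ, e μ` has a half `a`, and translating the second factor by `a`
-- makes complementary planes contribute equally.
lemma even_cupPairing_self_of_odd_card (hG : Odd (Fintype.card G)) (hz : IsTwoCocycle e z) :
    Even (cupPairing e z z) := by
  obtain ⟨k, hk⟩ := hG
  set a : G := k • ∑ μ, e μ with a_def
  have ha_mem : a ∈ AddSubmonoid.closure (Set.range e) :=
    nsmul_mem (sum_mem fun μ _ => AddSubmonoid.subset_closure (Set.mem_range_self μ)) k
  have ha : e 0 + e 1 + e 2 + e 3 + (a + a) = 0 := by
    calc e 0 + e 1 + e 2 + e 3 + (a + a) = (2 * k + 1) • ∑ μ, e μ := by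
          rw [a_def, ← Fin.sum_univ_four, add_nsmul, mul_nsmul', two_nsmul, one_nsmul, add_comm]
      _ = 0 := by rw [← hk, card_nsmul_eq_zero]
  rw [← cupPairing_shift hz hz ha_mem]
  refine ⟨planePairing e z (shift a z) 0 1 2 3 - planePairing e z (shift a z) 0 2 1 3
    + planePairing e z (shift a z) 0 3 1 2, ?_⟩
  rw [cupPairing, planePairing_shift_comm (μ := 0) (ν := 1) (ρ := 2) (σ := 3) ha,
    planePairing_shift_comm (μ := 0) (ν := 2) (ρ := 1) (σ := 3) (by rw [← ha]; abel),
    planePairing_shift_comm (μ := 0) (ν := 3) (ρ := 1) (σ := 2) (by rw [← ha]; abel)]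
  ring

end FourDimensional

end CupPairing

section Collapse

variable {ι R : Type*} {L : ℕ}

/-- The cellular map from the cycle of length `L + 1` to the cycle of length `L` that contracts the
edge from `-1` to `0`. -/
def collapseCoord (i : ZMod (L + 1)) : ZMod L :=
  i.val

/-- The section of `collapseCoord` that avoids `-1`. -/
def liftCoord (j : ZMod L) : ZMod (L + 1) :=
  j.val

/-- The degree of `collapseCoord` on the edge from `i` to `i + 1`. -/
def edgeDegree (R : Type*) [Zero R] [One R] (i : ZMod (L + 1)) : R :=
  if i = -1 then 0 else 1

/-- The map of tori that acts as `collapseCoord` on every coordinate. -/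
def collapse (n : ι → ZMod (L + 1)) (i : ι) : ZMod L :=
  collapseCoord (n i)

/-- The unit step in direction `μ` of the periodic lattice. -/
def unitVector [DecidableEq ι] (L : ℕ) (μ : ι) : ι → ZMod L :=
  Pi.single μ 1

lemma val_lt_of_ne_neg_one {i : ZMod (L + 1)} (hi : i ≠ -1) : i.val < L := by
  refine (Nat.lt_succ_iff.mp (ZMod.val_lt i)).lt_of_ne fun h => hi ?_
  exact ZMod.val_injective _ (h.trans (ZMod.val_neg_one L).symm)

lemma collapseCoord_neg_one_add_one :
    collapseCoord (-1 + 1 : ZMod (L + 1)) = collapseCoord (-1) := by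
  simp only [collapseCoord, neg_add_cancel, ZMod.val_zero, ZMod.val_neg_one, Nat.cast_zero,
    ZMod.natCast_self]

lemma unitVector_apply_of_ne [DecidableEq ι] {μ ν : ι} (h : ν ≠ μ) : unitVector L μ ν = 0 :=
  Pi.single_eq_of_ne h 1

lemma add_unitVector_apply_of_ne [DecidableEq ι] (n : ι → ZMod L) {μ ν : ι} (h : ν ≠ μ) :
    (n + unitVector L μ) ν = n ν := by
  rw [Pi.add_apply, unitVector_apply_of_ne h, add_zero]

lemma liftCoord_collapseCoord {i : ZMod (L + 1)} (hi : i ≠ -1) :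
    liftCoord (collapseCoord i) = i := by
  rw [liftCoord, collapseCoord, ZMod.val_natCast_of_lt (val_lt_of_ne_neg_one hi),
    ZMod.natCast_zmod_val]

lemma collapse_add_unitVector_of_eq [DecidableEq ι] {n : ι → ZMod (L + 1)} {τ : ι}
    (h : n τ = -1) : collapse (n + unitVector (L + 1) τ) = collapse n := by
  funext i
  rcases eq_or_ne i τ with rfl | hi
  · simp only [collapse, unitVector, Pi.add_apply, Pi.single_eq_same, h,
      collapseCoord_neg_one_add_one]
  · simp only [collapse, Pi.add_apply, unitVector_apply_of_ne hi, add_zero]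

variable [NeZero L]

lemma collapseCoord_add_one {i : ZMod (L + 1)} (hi : i ≠ -1) :
    collapseCoord (i + 1) = collapseCoord i + 1 := by
  have one_val : (1 : ZMod (L + 1)).val = 1 :=
    ZMod.val_one'' (Nat.succ_ne_succ_iff.mpr (NeZero.ne L))
  have val_succ : (i + 1).val = i.val + 1 := by
    rw [ZMod.val_add_of_lt (by rw [one_val]; exact Nat.succ_lt_succ (val_lt_of_ne_neg_one hi)),
      one_val]
  rw [collapseCoord, val_succ, Nat.cast_add_one, collapseCoord]

lemma val_liftCoord (j : ZMod L) : (liftCoord j).val = j.val :=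
  ZMod.val_natCast_of_lt ((ZMod.val_lt j).trans (Nat.lt_succ_self L))

lemma collapseCoord_liftCoord (j : ZMod L) : collapseCoord (liftCoord j) = j := by
  rw [collapseCoord, val_liftCoord, ZMod.natCast_zmod_val]

lemma liftCoord_ne_neg_one (j : ZMod L) : liftCoord j ≠ -1 := fun h =>
  (ZMod.val_lt j).ne (by rw [← val_liftCoord, h, ZMod.val_neg_one])

variable [CommRing R]

lemma sum_prod_edgeDegree_mul_comp_collapse [Fintype ι] [DecidableEq ι] (g : (ι → ZMod L) → R) :
    ∑ n : ι → ZMod (L + 1), (∏ i, edgeDegree R (n i)) * g (collapse n) = ∑ n, g n := by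
  have collapse_lift : Function.LeftInverse collapse fun (n : ι → ZMod L) i => liftCoord (n i) :=
    fun n => funext fun i => collapseCoord_liftCoord (n i)
  symm
  refine Fintype.sum_of_injective (fun n i => liftCoord (n i))
    collapse_lift.injective _ _ (fun n hn => ?_) (fun n => ?_)
  · obtain ⟨i, hi⟩ : ∃ i, n i = -1 := by
      by_contra! h
      exact hn ⟨collapse n, funext fun i => liftCoord_collapseCoord (h i)⟩
    rw [Finset.prod_eq_zero (Finset.mem_univ i) (by rw [edgeDegree, if_pos hi]), zero_mul]
  · have degree_lift : ∏ i, edgeDegree R (liftCoord (n i)) = 1 :=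
      Finset.prod_eq_one fun i _ => if_neg (liftCoord_ne_neg_one (n i))
    rw [collapse_lift, degree_lift, one_mul]

variable [DecidableEq ι]

lemma collapse_add_unitVector {n : ι → ZMod (L + 1)} {τ : ι} (h : n τ ≠ -1) :
    collapse (n + unitVector (L + 1) τ) = collapse n + unitVector L τ := by
  funext i
  rcases eq_or_ne i τ with rfl | hi
  · simp only [collapse, unitVector, Pi.add_apply, Pi.single_eq_same, collapseCoord_add_one h]
  · simp only [collapse, Pi.add_apply, unitVector_apply_of_ne hi, add_zero]

lemma fwdDiff_comp_collapse (f : (ι → ZMod L) → R) (τ : ι) (n : ι → ZMod (L + 1)) :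
    Δ_[unitVector (L + 1) τ] (f ∘ collapse) n
      = edgeDegree R (n τ) * Δ_[unitVector L τ] f (collapse n) := by
  by_cases h : n τ = -1
  · simp only [fwdDiff, Function.comp_apply, collapse_add_unitVector_of_eq h, edgeDegree, if_pos h,
      sub_self, zero_mul]
  · simp only [fwdDiff, Function.comp_apply, collapse_add_unitVector h, edgeDegree, if_neg h,
      one_mul]

/-- The pullback of a 2-cochain along `collapse`, which vanishes on the plaquettes that `collapse`
degenerates. -/
def pullback (z : ι → ι → (ι → ZMod L) → R) (μ ν : ι) (n : ι → ZMod (L + 1)) : R :=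
  edgeDegree R (n μ) * edgeDegree R (n ν) * z μ ν (collapse n)

lemma fwdDiff_pullback (z : ι → ι → (ι → ZMod L) → R) {τ ρ σ : ι} (hρ : ρ ≠ τ) (hσ : σ ≠ τ)
    (n : ι → ZMod (L + 1)) :
    Δ_[unitVector (L + 1) τ] (pullback z ρ σ) n
      = edgeDegree R (n τ) * edgeDegree R (n ρ) * edgeDegree R (n σ)
        * Δ_[unitVector L τ] (z ρ σ) (collapse n) := by
  have h := fwdDiff_comp_collapse (z ρ σ) τ n
  simp only [fwdDiff, Function.comp_apply, pullback, add_unitVector_apply_of_ne n hρ,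
    add_unitVector_apply_of_ne n hσ] at h ⊢
  linear_combination edgeDegree R (n ρ) * edgeDegree R (n σ) * h

lemma IsTwoCocycle.pullback {z : ι → ι → (ι → ZMod L) → R}
    (hz : IsTwoCocycle (unitVector L) z) :
    IsTwoCocycle (unitVector (L + 1)) (pullback z) := by
  refine .of_pairwise_ne (fun μ n => ?_) (fun μ ν n => ?_) fun μ ν ρ n hμν hμρ hνρ => ?_
  · rw [LatticeField.pullback, hz.diag, mul_zero]
  · rw [LatticeField.pullback, LatticeField.pullback, hz.antisymm μ ν]
    ring
  · rw [fwdDiff_pullback z hμν.symm hμρ.symm, fwdDiff_pullback z hνρ.symm hμν,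
      fwdDiff_pullback z hμρ hνρ]
    linear_combination
      edgeDegree R (n μ) * edgeDegree R (n ν) * edgeDegree R (n ρ) * hz.closed μ ν ρ (collapse n)

lemma planePairing_pullback [Fintype ι] (x y : ι → ι → (ι → ZMod L) → R) {μ ν ρ σ : ι}
    (h : Function.Bijective ![μ, ν, ρ, σ]) :
    planePairing (unitVector (L + 1)) (pullback x) (pullback y) μ ν ρ σ
      = planePairing (unitVector L) x y μ ν ρ σ := by
  have ne {i j : Fin 4} (hij : i ≠ j) : ![μ, ν, ρ, σ] i ≠ ![μ, ν, ρ, σ] j := h.injective.ne hij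
  have hνμ : ν ≠ μ := ne (i := 1) (j := 0) (by decide)
  have hρμ : ρ ≠ μ := ne (i := 2) (j := 0) (by decide)
  have hρν : ρ ≠ ν := ne (i := 2) (j := 1) (by decide)
  have hσμ : σ ≠ μ := ne (i := 3) (j := 0) (by decide)
  have hσν : σ ≠ ν := ne (i := 3) (j := 1) (by decide)
  unfold planePairing
  rw [← sum_prod_edgeDegree_mul_comp_collapse fun n => x μ ν n * y ρ σ (n + _ + _)]
  refine Finset.sum_congr rfl fun n _ => ?_
  rw [← h.prod_comp fun i => edgeDegree R (n i), Fin.prod_univ_four]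
  simp only [pullback, add_unitVector_apply_of_ne _ hρμ, add_unitVector_apply_of_ne _ hρν,
    add_unitVector_apply_of_ne _ hσμ, add_unitVector_apply_of_ne _ hσν, Matrix.cons_val]
  by_cases hμ : n μ = -1
  · simp only [edgeDegree, if_pos hμ, zero_mul]
  by_cases hν : n ν = -1
  · simp only [edgeDegree, if_pos hν, zero_mul, mul_zero]
  have hν' : (n + unitVector (L + 1) μ) ν ≠ -1 := by rwa [add_unitVector_apply_of_ne n hνμ]
  rw [collapse_add_unitVector hν', collapse_add_unitVector hμ]
  ring

end Collapse

section Torus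

variable {L : ℕ} [NeZero L]

lemma cupPairing_pullback {R : Type*} [CommRing R]
    (x y : Fin 4 → Fin 4 → (Fin 4 → ZMod L) → R) :
    cupPairing (unitVector (L + 1)) (pullback x) (pullback y)
      = cupPairing (unitVector L) x y := by
  simp only [cupPairing]
  rw [planePairing_pullback x y (by decide), planePairing_pullback x y (by decide),
    planePairing_pullback x y (by decide), planePairing_pullback x y (by decide),
    planePairing_pullback x y (by decide), planePairing_pullback x y (by decide)]

theorem even_cupPairing_self {R : Type*} [CommRing R]
    {z : Fin 4 → Fin 4 → (Fin 4 → ZMod L) → R} (hz : IsTwoCocycle (unitVector L) z) :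
    Even (cupPairing (unitVector L) z z) := by
  have odd_card {M : ℕ} [NeZero M] (hM : Odd M) : Odd (Fintype.card (Fin 4 → ZMod M)) := by
    rw [Fintype.card_fun, ZMod.card]
    exact hM.pow
  rcases Nat.even_or_odd L with hL | hL
  · rw [← cupPairing_pullback]
    exact even_cupPairing_self_of_odd_card (odd_card hL.add_one) hz.pullback
  · exact even_cupPairing_self_of_odd_card (odd_card hL) hz

end Torus

section LeviCivita

variable {G R : Type*} [AddCommGroup G] {e : Fin 4 → G}

/-- The sign of `b - a`; the Levi-Civita symbol is its product over the pairs of positions. -/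
def orderSign (a b : Fin 4) : ℤ :=
  if a < b then 1 else if b < a then -1 else 0

lemma levicivita_eq_prod_orderSign (μ ν ρ σ : Fin 4) :
    levicivita μ ν ρ σ = orderSign μ ν * orderSign μ ρ * orderSign μ σ * orderSign ν ρ
      * orderSign ν σ * orderSign ρ σ := by
  revert μ ν ρ σ
  decide +kernel

lemma sum_levicivita_mul_of_antisymm [CommRing R] {f : Fin 4 → Fin 4 → Fin 4 → Fin 4 → R}
    (hl : ∀ μ ν ρ σ, f μ ν ρ σ = -f ν μ ρ σ) (hr : ∀ μ ν ρ σ, f μ ν ρ σ = -f μ ν σ ρ) :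
    ∑ μ, ∑ ν, ∑ ρ, ∑ σ, (levicivita μ ν ρ σ : R) * f μ ν ρ σ
      = 4 * (f 0 1 2 3 + f 2 3 0 1 - f 0 2 1 3 - f 1 3 0 2 + f 0 3 1 2 + f 1 2 0 3) := by
  simp only [levicivita_eq_prod_orderSign, orderSign, Fin.sum_univ_four, Fin.reduceLT, ↓reduceIte]
  simp only [hl 1 0, hl 2 0, hl 3 0, hl 2 1, hl 3 1, hl 3 2, hr _ _ 1 0, hr _ _ 2 0, hr _ _ 3 0,
    hr _ _ 2 1, hr _ _ 3 1, hr _ _ 3 2]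
  ring

lemma sum_levicivita_mul_mul [Fintype G] [CommRing R] {x y : Fin 4 → Fin 4 → G → R}
    (hx : ∀ μ ν n, x μ ν n = -x ν μ n) (hy : ∀ μ ν n, y μ ν n = -y ν μ n) :
    ∑ n, ∑ μ, ∑ ν, ∑ ρ, ∑ σ, (levicivita μ ν ρ σ : R) * x μ ν n * y ρ σ (n + e μ + e ν)
      = 4 * cupPairing e x y := by
  simp only [cupPairing, planePairing, ← Finset.sum_add_distrib, ← Finset.sum_sub_distrib,
    Finset.mul_sum]
  refine Finset.sum_congr rfl fun n _ => ?_
  simp only [mul_assoc]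
  refine sum_levicivita_mul_of_antisymm (f := fun μ ν ρ σ => x μ ν n * y ρ σ (n + e μ + e ν))
    (fun μ ν ρ σ => ?_) (fun μ ν ρ σ => ?_)
  · rw [hx, add_right_comm, neg_mul]
  · rw [hy, mul_neg]

lemma sum_levicivita_mul_eq_zero_iff {g : Fin 4 → Fin 4 → Fin 4 → ℤ}
    (hg : ∀ ν ρ σ, g ν ρ σ = -g ν σ ρ) :
    (∀ μ, ∑ ν, ∑ ρ, ∑ σ, levicivita μ ν ρ σ * g ν ρ σ = 0) ↔
      ∀ ν ρ σ, ν ≠ ρ → ν ≠ σ → ρ ≠ σ → g ν ρ σ + g ρ σ ν + g σ ν ρ = 0 := by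
  simp only [levicivita_eq_prod_orderSign, orderSign, Fin.sum_univ_four, Fin.forall_fin_succ,
    IsEmpty.forall_iff]
  grind

lemma IsTwoCocycle.of_levicivita {z : Fin 4 → Fin 4 → G → ℤ}
    (hanti : ∀ μ ν n, z μ ν n = -z ν μ n)
    (hflat : ∀ μ n, ∑ ν, ∑ ρ, ∑ σ, levicivita μ ν ρ σ * Δ_[e ν] (z ρ σ) n = 0) :
    IsTwoCocycle e z := by
  refine .of_pairwise_ne (fun μ n => self_eq_neg.mp (hanti μ μ n)) hanti fun μ ν ρ n => ?_
  refine (sum_levicivita_mul_eq_zero_iff (g := fun ν ρ σ => Δ_[e ν] (z ρ σ) n) ?_).mp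
    (hflat · n) μ ν ρ
  intro α β γ
  simp only [fwdDiff, hanti γ β]
  ring

end LeviCivita

end LatticeField

/-- For an exactly flat antisymmetric integer field `z̄_{μν}(n)` on the
periodic lattice `Λ = (ℤ/Lℤ)⁴`, the lattice Pontryagin-square sum
`(1/8) Σ_{n∈Λ} Σ ε_{μνρσ} z̄_{μν}(n) z̄_{ρσ}(n+μ̂+ν̂)` is an integer; in particular, for
every `N ≥ 1` the fractional part of the topological charge lies in `(1/N)·ℤ`. -/
theorem pontryagin_square_integral
    (L : ℕ) [NeZero L] (hL : 2 ≤ L)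
    (zb : Fin 4 → Fin 4 → (Fin 4 → ZMod L) → ℤ)
    (hanti : ∀ μ ν n, zb μ ν n = - zb ν μ n)
    (hflat : ∀ (μ : Fin 4) (n : Fin 4 → ZMod L),
      ∑ ν : Fin 4, ∑ ρ : Fin 4, ∑ σ : Fin 4,
        levicivita μ ν ρ σ * (zb ρ σ (n + Pi.single ν 1) - zb ρ σ n) = 0) :
    (∃ k : ℤ,
        ((1 : ℚ) / 8) * ∑ n : Fin 4 → ZMod L,
            ∑ μ : Fin 4, ∑ ν : Fin 4, ∑ ρ : Fin 4, ∑ σ : Fin 4,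
              (levicivita μ ν ρ σ : ℚ) * (zb μ ν n : ℚ) *
                (zb ρ σ (n + Pi.single μ 1 + Pi.single ν 1) : ℚ)
          = (k : ℚ)) ∧
      ∀ N : ℕ, 1 ≤ N → ∃ k : ℤ,
        -((1 : ℚ) / (8 * (N : ℚ))) * ∑ n : Fin 4 → ZMod L,
            ∑ μ : Fin 4, ∑ ν : Fin 4, ∑ ρ : Fin 4, ∑ σ : Fin 4,
              (levicivita μ ν ρ σ : ℚ) * (zb μ ν n : ℚ) *
                (zb ρ σ (n + Pi.single μ 1 + Pi.single ν 1) : ℚ)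
          = (k : ℚ) / (N : ℚ) := by
  have hz : LatticeField.IsTwoCocycle (LatticeField.unitVector L) zb :=
    LatticeField.IsTwoCocycle.of_levicivita hanti hflat
  obtain ⟨k, cup_eq⟩ := LatticeField.even_cupPairing_self hz
  have sum_eq := LatticeField.sum_levicivita_mul_mul (e := LatticeField.unitVector L) hanti hanti
  have sum_eq_cast : ∑ n : Fin 4 → ZMod L,
      ∑ μ : Fin 4, ∑ ν : Fin 4, ∑ ρ : Fin 4, ∑ σ : Fin 4,
        (levicivita μ ν ρ σ : ℚ) * (zb μ ν n : ℚ) *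
          (zb ρ σ (n + Pi.single μ 1 + Pi.single ν 1) : ℚ) = 8 * (k : ℚ) := by
    rw [cup_eq, ← two_mul, ← mul_assoc] at sum_eq
    exact_mod_cast sum_eq
  rw [sum_eq_cast]
  refine ⟨⟨k, by ring⟩, fun N hN => ⟨-k, ?_⟩⟩
  have hN_ne : (N : ℚ) ≠ 0 := Nat.cast_ne_zero.mpr (Nat.one_le_iff_ne_zero.mp hN)
  push_cast
  field_simp

end
end
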